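/- Multi-letter to single-letter lower bound with auxiliary identification (key converse step). Let M, K and the sequences S^n = (S_1,…,S_n), X^n = (X_1,…,X_n) be finitely-valued random variables with an arbitrary joint distribution. For i = 1,…,n define U_i = (M, K, S_{i+1:n}, X_{1:i−1}) and A_i = (X_{1:i−1}, S_{1:i−1}, S_{i+1:n}). Then I(M, K ; X^n | S^n) ≥ Σ_{i=1}^n I(U_i ; X_i | S_i) − Σ_{i=1}^n I(X_i ; A_i | S_i). -/

import Mathlib

open Finset Filter Real

noncomputable section

open scoped Classical

/-- Pushforward of a mass function along a map. -/
def pushf {α β : Type*} [Fintype α] (p : α → ℝ) (f : α → β) : β → ℝ :=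
  fun b => ∑ a, if f a = b then p a else 0

/-- Shannon entropy (in bits) of a mass function on a finite type,
with the convention `0 * logb 2 0 = 0`. -/
def ent {α : Type*} [Fintype α] (p : α → ℝ) : ℝ := -∑ a, p a * Real.logb 2 (p a)

/-- Shannon entropy (in bits) of a random variable `f` under the mass function `p`. -/
def entRV {α β : Type*} [Fintype α] [Fintype β] (p : α → ℝ) (f : α → β) : ℝ :=
  ent (pushf p f)

/-- Mutual information `I(f; g)` (in bits) under the mass function `p`. -/
def mi {α β γ : Type*} [Fintype α] [Fintype β] [Fintype γ]
    (p : α → ℝ) (f : α → β) (g : α → γ) : ℝ :=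
  entRV p f + entRV p g - entRV p (fun a => (f a, g a))

/-- Conditional mutual information `I(f; g | h)` (in bits) under the mass function `p`. -/
def cmi {α β γ δ : Type*} [Fintype α] [Fintype β] [Fintype γ] [Fintype δ]
    (p : α → ℝ) (f : α → β) (g : α → γ) (h : α → δ) : ℝ :=
  entRV p (fun a => (f a, h a)) + entRV p (fun a => (g a, h a))
    - entRV p (fun a => (f a, g a, h a)) - entRV p h

/-- Conditional entropy `H(f | g)` (in bits) under the mass function `p`. -/
def condEnt {α β γ : Type*} [Fintype α] [Fintype β] [Fintype γ]
    (p : α → ℝ) (f : α → β) (g : α → γ) : ℝ :=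
  entRV p (fun a => (f a, g a)) - entRV p g

/-- Total variation distance between two mass functions on a finite type. -/
def TV {α : Type*} [Fintype α] (p q : α → ℝ) : ℝ := (∑ a, |p a - q a|) / 2

/-- The binary entropy function (in bits), with `h2 0 = h2 1 = 0`. -/
def h2 (t : ℝ) : ℝ := -(t * Real.logb 2 t) - (1 - t) * Real.logb 2 (1 - t)

-- HELPERS
theorem entRV_eq_sum {α β : Type*} [Fintype α] [Fintype β] (p : α → ℝ) (f : α → β) :
    entRV p f = -∑ a, p a * Real.logb 2 (pushf p f (f a)) := by
  unfold entRV ent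
  congr 1
  have h1 : ∀ b, pushf p f b * Real.logb 2 (pushf p f b)
      = ∑ a, if f a = b then p a * Real.logb 2 (pushf p f (f a)) else 0 := by
    intro b
    conv_lhs => rw [pushf, Finset.sum_mul]
    apply Finset.sum_congr rfl
    intro a _
    by_cases h : f a = b
    · subst h; simp [pushf]
    · simp [h]
  simp_rw [h1]
  rw [Finset.sum_comm]
  simp

theorem entRV_congr {α β γ : Type*} [Fintype α] [Fintype β] [Fintype γ] (p : α → ℝ)
    (f : α → β) (g : α → γ) (h : ∀ a b, f a = f b ↔ g a = g b) :
    entRV p f = entRV p g := by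
  rw [entRV_eq_sum, entRV_eq_sum]
  simp only [pushf, h]

theorem pushf_nonneg {α β : Type*} [Fintype α] (p : α → ℝ) (hp0 : ∀ a, 0 ≤ p a) (f : α → β)
    (b : β) : 0 ≤ pushf p f b :=
  Finset.sum_nonneg fun a _ => by split_ifs <;> simp [hp0]

theorem pushf_pos {α β : Type*} [Fintype α] (p : α → ℝ) (hp0 : ∀ a, 0 ≤ p a) (f : α → β)
    (a : α) (ha : 0 < p a) : 0 < pushf p f (f a) := by
  refine lt_of_lt_of_le ha ?_
  have := Finset.single_le_sum (f := fun b => if f b = f a then p b else 0)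
    (fun b _ => by split_ifs <;> simp [hp0]) (Finset.mem_univ a)
  simpa [pushf] using this

theorem sum_pushf {α β : Type*} [Fintype α] [Fintype β] (p : α → ℝ) (f : α → β) (w : β → ℝ) :
    ∑ b, pushf p f b * w b = ∑ a, p a * w (f a) := by
  simp only [pushf, Finset.sum_mul]
  rw [Finset.sum_comm]
  simp

theorem sum_pushf_fst {α β γ : Type*} [Fintype α] [Fintype β] (p : α → ℝ)
    (f : α → β) (h : α → γ) (z : γ) :
    ∑ x, pushf p (fun a => (f a, h a)) (x, z) = pushf p h z := by
  simp only [pushf]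
  rw [Finset.sum_comm]
  apply Finset.sum_congr rfl
  intro a _
  by_cases hz : h a = z <;> simp [hz]

theorem cmi_nonneg {α β γ δ : Type*} [Fintype α] [Fintype β] [Fintype γ] [Fintype δ]
    (p : α → ℝ) (hp0 : ∀ a, 0 ≤ p a) (hp1 : ∑ a, p a = 1)
    (f : α → β) (g : α → γ) (h : α → δ) : 0 ≤ cmi p f g h := by
  set A := pushf p (fun a => (f a, h a)) with hA
  set B := pushf p (fun a => (g a, h a)) with hB
  set C := pushf p (fun a => (f a, g a, h a)) with hC
  set D := pushf p h with hD
  have hA0 : ∀ t, 0 ≤ A t := pushf_nonneg p hp0 _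
  have hB0 : ∀ t, 0 ≤ B t := pushf_nonneg p hp0 _
  have hC0 : ∀ t, 0 ≤ C t := pushf_nonneg p hp0 _
  have hD0 : ∀ t, 0 ≤ D t := pushf_nonneg p hp0 _
  let w : β × γ × δ → ℝ := fun t => A (t.1, t.2.2) * B (t.2.1, t.2.2) / (C t * D t.2.2)
  have key : ∑ a, p a * w (f a, g a, h a) ≤ 1 := by
    have e := sum_pushf p (fun a => (f a, g a, h a)) w
    rw [← e]
    calc ∑ t, C t * w t ≤ ∑ t : β × γ × δ, A (t.1, t.2.2) * B (t.2.1, t.2.2) / D t.2.2 := by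
          apply Finset.sum_le_sum
          intro t _
          by_cases hc : C t = 0
          · rw [hc, zero_mul]
            exact div_nonneg (mul_nonneg (hA0 _) (hB0 _)) (hD0 _)
          · apply le_of_eq
            simp only [w]
            rw [← mul_div_assoc, mul_div_mul_left _ _ hc]
      _ = ∑ x, ∑ y, ∑ z, A (x, z) * B (y, z) / D z := by
          simp only [Fintype.sum_prod_type]
      _ = ∑ z, ∑ x, ∑ y, A (x, z) * B (y, z) / D z := by
          conv_rhs => rw [Finset.sum_comm]
          refine Finset.sum_congr rfl fun x _ => ?_
          exact Finset.sum_comm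
      _ = ∑ z, D z * D z / D z := by
          apply Finset.sum_congr rfl
          intro z _
          have hf : ∑ x, A (x, z) = D z := sum_pushf_fst p f h z
          have hg : ∑ y, B (y, z) = D z := sum_pushf_fst p g h z
          simp only [← Finset.sum_div, ← Finset.mul_sum, ← Finset.sum_mul, hf, hg]
      _ = ∑ z, D z * 1 := by
          apply Finset.sum_congr rfl
          intro z _
          rw [mul_self_div_self, mul_one]
      _ = 1 := by
          rw [hD, sum_pushf p h (fun _ => 1)]
          simpa using hp1
      _ ≤ 1 := le_rfl
  have hlog2 : 0 < Real.log 2 := Real.log_pos (by norm_num)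
  have pt : ∀ a, p a * (1 - w (f a, g a, h a)) ≤ Real.log 2 *
      (p a * Real.logb 2 (C (f a, g a, h a)) + p a * Real.logb 2 (D (h a))
        - p a * Real.logb 2 (A (f a, h a)) - p a * Real.logb 2 (B (g a, h a))) := by
    intro a
    rcases (hp0 a).eq_or_lt with ha | ha
    · simp [← ha]
    have a1 : 0 < A (f a, h a) := pushf_pos p hp0 (fun a => (f a, h a)) a ha
    have b1 : 0 < B (g a, h a) := pushf_pos p hp0 (fun a => (g a, h a)) a ha
    have c1 : 0 < C (f a, g a, h a) := pushf_pos p hp0 (fun a => (f a, g a, h a)) a ha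
    have d1 : 0 < D (h a) := pushf_pos p hp0 h a ha
    have hw : 0 < w (f a, g a, h a) := by simp only [w]; positivity
    have hl := Real.log_le_sub_one_of_pos hw
    have hlw : Real.log (w (f a, g a, h a)) = Real.log (A (f a, h a)) + Real.log (B (g a, h a))
        - (Real.log (C (f a, g a, h a)) + Real.log (D (h a))) := by
      simp only [w]
      rw [Real.log_div (by positivity) (by positivity), Real.log_mul a1.ne' b1.ne',
        Real.log_mul c1.ne' d1.ne']
    have : Real.log 2 *
      (p a * Real.logb 2 (C (f a, g a, h a)) + p a * Real.logb 2 (D (h a))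
        - p a * Real.logb 2 (A (f a, h a)) - p a * Real.logb 2 (B (g a, h a)))
        = p a * (-Real.log (w (f a, g a, h a))) := by
      rw [hlw]; simp only [Real.logb]; field_simp; ring
    rw [this]
    exact mul_le_mul_of_nonneg_left (by linarith) ha.le
  have tot := Finset.sum_le_sum (s := Finset.univ) fun a _ => pt a
  have e1 : ∑ a, p a * (1 - w (f a, g a, h a)) = 1 - ∑ a, p a * w (f a, g a, h a) := by
    simp only [mul_sub, mul_one, Finset.sum_sub_distrib, hp1]
  have e2 : cmi p f g h = ∑ a, (p a * Real.logb 2 (C (f a, g a, h a))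
        + p a * Real.logb 2 (D (h a))
        - p a * Real.logb 2 (A (f a, h a)) - p a * Real.logb 2 (B (g a, h a))) := by
    simp only [cmi, entRV_eq_sum, Finset.sum_sub_distrib, Finset.sum_add_distrib]
    ring
  rw [← Finset.mul_sum, ← e2, e1] at tot
  have : 0 ≤ Real.log 2 * cmi p f g h := by linarith
  exact nonneg_of_mul_nonneg_right this hlog2

theorem mask_eq_iff {T : Type*} (c : Prop) [Decidable c] (x y : T) :
    ((if c then some x else none) = (if c then some y else none)) ↔ (c → x = y) := by
  by_cases h : c <;> simp [h]

/-- **Multi-letter to single-letter lower bound with auxiliary identification** (key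
converse step).  For arbitrary finitely-valued `M, K, Sⁿ, Xⁿ` with any joint law,
setting `Uᵢ = (M, K, S_{i+1:n}, X_{1:i−1})` and `Aᵢ = (X_{1:i−1}, S_{1:i−1}, S_{i+1:n})`
(subsequences encoded by masking the complementary coordinates with `none`):
`I(M,K; Xⁿ | Sⁿ) ≥ Σᵢ I(Uᵢ; Xᵢ | Sᵢ) − Σᵢ I(Xᵢ; Aᵢ | Sᵢ)`. -/
theorem multiletter_single_letter_lower_bound
    {Ω MT KT ST XT : Type*} [Fintype Ω] [Fintype MT] [Fintype KT] [Fintype ST] [Fintype XT]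
    (n : ℕ)
    (p : Ω → ℝ) (hp0 : ∀ ω, 0 ≤ p ω) (hp1 : ∑ ω, p ω = 1)
    (fM : Ω → MT) (fK : Ω → KT) (fS : Ω → Fin n → ST) (fX : Ω → Fin n → XT) :
    cmi p (fun ω => (fM ω, fK ω)) fX fS ≥
      (∑ i : Fin n, cmi p
          (fun ω => (fM ω, fK ω,
            (fun j : Fin n => if i < j then some (fS ω j) else none),
            (fun j : Fin n => if j < i then some (fX ω j) else none)))
          (fun ω => fX ω i) (fun ω => fS ω i))
      - ∑ i : Fin n, cmi p
          (fun ω => fX ω i)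
          (fun ω => ((fun j : Fin n => if j < i then some (fX ω j) else none),
            (fun j : Fin n => if j < i then some (fS ω j) else none),
            (fun j : Fin n => if i < j then some (fS ω j) else none)))
          (fun ω => fS ω i) := by
  let G : ℕ → ℝ := fun k => entRV p (fun ω =>
    ((fun j : Fin n => if j.val < k then some (fX ω j) else none), fS ω))
  let F : ℕ → ℝ := fun k => entRV p (fun ω =>
    ((fM ω, fK ω), (fun j : Fin n => if j.val < k then some (fX ω j) else none), fS ω))
  have hL : cmi p (fun ω => (fM ω, fK ω)) fX fS
      = ∑ i : Fin n, ((G (i.val + 1) - G i.val) - (F (i.val + 1) - F i.val)) := by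
    rw [Finset.sum_sub_distrib, Fin.sum_univ_eq_sum_range (fun k => G (k + 1) - G k),
      Fin.sum_univ_eq_sum_range (fun k => F (k + 1) - F k), Finset.sum_range_sub,
      Finset.sum_range_sub]
    have g0 : G 0 = entRV p fS := entRV_congr p _ _ fun a b => by simp
    have f0 : F 0 = entRV p (fun ω => ((fM ω, fK ω), fS ω)) :=
      entRV_congr p _ _ fun a b => by simp
    have gn : G n = entRV p (fun ω => (fX ω, fS ω)) :=
      entRV_congr p _ _ fun a b => by simp [funext_iff]
    have fn : F n = entRV p (fun ω => ((fM ω, fK ω), fX ω, fS ω)) :=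
      entRV_congr p _ _ fun a b => by simp [funext_iff]
    rw [g0, f0, gn, fn, cmi]
    ring
  rw [hL, ge_iff_le, ← Finset.sum_sub_distrib]
  apply Finset.sum_le_sum
  intro i _
  have h0 := cmi_nonneg p hp0 hp1 fS (fun ω => fX ω i) (fun ω => ((fM ω, fK ω,
            (fun j : Fin n => if i < j then some (fS ω j) else none),
            (fun j : Fin n => if j < i then some (fX ω j) else none)), fS ω i))
  have hx : ∀ a b : Ω, ((∀ j : Fin n, j < i → fX a j = fX b j) ∧ fX a i = fX b i) ↔
      ∀ j : Fin n, j.val < i.val + 1 → fX a j = fX b j := by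
    intro a b
    constructor
    · rintro ⟨h1, h2⟩ j hj
      rcases lt_or_eq_of_le (Nat.lt_succ_iff.mp hj) with h | h
      · exact h1 j h
      · rw [Fin.ext h]; exact h2
    · intro h
      exact ⟨fun j hj => h j (Nat.lt_succ_of_lt hj), h i (Nat.lt_succ_self _)⟩
  have hs : ∀ a b : Ω, (∀ j, fS a j = fS b j) ↔ ((∀ j : Fin n, j < i → fS a j = fS b j) ∧
      (∀ j : Fin n, i < j → fS a j = fS b j) ∧ fS a i = fS b i) := by
    intro a b
    constructor
    · intro h
      exact ⟨fun j _ => h j, fun j _ => h j, h i⟩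
    · rintro ⟨h1, h2, h3⟩ j
      rcases lt_trichotomy j i with h | h | h
      · exact h1 j h
      · rw [h]; exact h3
      · exact h2 j h
  unfold cmi at h0 ⊢
  have k1 := entRV_congr p (fun ω => (fS ω, ((fM ω, fK ω,
            (fun j : Fin n => if i < j then some (fS ω j) else none),
            (fun j : Fin n => if j < i then some (fX ω j) else none)), fS ω i)))
      (fun ω => ((fM ω, fK ω),
        (fun j : Fin n => if j.val < i.val then some (fX ω j) else none), fS ω))
      (fun a b => by
        simp only [Prod.mk.injEq, funext_iff, mask_eq_iff, hs, ← Fin.lt_def]; tauto)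
  have k2 := entRV_congr p (fun ω => (fS ω, fX ω i, ((fM ω, fK ω,
            (fun j : Fin n => if i < j then some (fS ω j) else none),
            (fun j : Fin n => if j < i then some (fX ω j) else none)), fS ω i)))
      (fun ω => ((fM ω, fK ω),
        (fun j : Fin n => if j.val < i.val + 1 then some (fX ω j) else none), fS ω))
      (fun a b => by
        simp only [Prod.mk.injEq, funext_iff, mask_eq_iff, hs, ← hx]; tauto)
  have k3 := entRV_congr p (fun ω => (((fun j : Fin n => if j < i then some (fX ω j) else none),
            (fun j : Fin n => if j < i then some (fS ω j) else none),
            (fun j : Fin n => if i < j then some (fS ω j) else none)), fS ω i))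
      (fun ω => ((fun j : Fin n => if j.val < i.val then some (fX ω j) else none), fS ω))
      (fun a b => by
        simp only [Prod.mk.injEq, funext_iff, mask_eq_iff, hs, ← Fin.lt_def]; tauto)
  have k4 := entRV_congr p (fun ω => (fX ω i,
            ((fun j : Fin n => if j < i then some (fX ω j) else none),
            (fun j : Fin n => if j < i then some (fS ω j) else none),
            (fun j : Fin n => if i < j then some (fS ω j) else none)), fS ω i))
      (fun ω => ((fun j : Fin n => if j.val < i.val + 1 then some (fX ω j) else none), fS ω))
      (fun a b => by
        simp only [Prod.mk.injEq, funext_iff, mask_eq_iff, hs, ← hx]; tauto)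
  have k5 := entRV_congr p (fun ω => (fX ω i, ((fM ω, fK ω,
            (fun j : Fin n => if i < j then some (fS ω j) else none),
            (fun j : Fin n => if j < i then some (fX ω j) else none)), fS ω i)))
      (fun ω => ((fM ω, fK ω,
            (fun j : Fin n => if i < j then some (fS ω j) else none),
            (fun j : Fin n => if j < i then some (fX ω j) else none)), fX ω i, fS ω i))
      (fun a b => by
        simp only [Prod.mk.injEq]; tauto)
  simp only [G, F]
  linarith
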